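/- Let S be a nonempty connected spacelike regular surface in Minkowski space 𝕃³ satisfying property 𝒫*. Then for every point A ∈ S there exists a spacelike plane Π such that Π ∩ S is a non-degenerate circle containing A. -/

import Mathlib

noncomputable section

open Module
open scoped RealInnerProductSpace

abbrev E3 : Type := EuclideanSpace ℝ (Fin 3)
abbrev E2 : Type := EuclideanSpace ℝ (Fin 2)

/-- `f : E2 → E3` restricted to the open set `U` is a local parametrization of the
surface `S` around the point `p`: it is smooth, has injective derivative at every
point of `U`, and is a homeomorphism onto its image `f '' U`, which is an open
neighborhood of `p` in `S` for the subspace topology. -/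
def IsChartAt (S : Set E3) (p : E3) (f : E2 → E3) (U : Set E2) : Prop :=
  IsOpen U ∧
  ContDiffOn ℝ (⊤ : ℕ∞) f U ∧
  (∀ u ∈ U, Function.Injective (fderiv ℝ f u)) ∧
  p ∈ f '' U ∧
  (∃ W : Set E3, IsOpen W ∧ f '' U = W ∩ S) ∧
  (∃ φ : U ≃ₜ (f '' U), ∀ u : U, (φ u : E3) = f u)

/-- A regular surface in ℝ³. -/
def IsRegularSurface (S : Set E3) : Prop :=
  ∀ p ∈ S, ∃ f U, IsChartAt S p f U

/-- A plane: a 2-dimensional affine subspace of ℝ³. -/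
def IsPlane (Pl : AffineSubspace ℝ E3) : Prop := finrank ℝ Pl.direction = 2

/-- A line: a 1-dimensional affine subspace of ℝ³. -/
def IsLine (L : AffineSubspace ℝ E3) : Prop := finrank ℝ L.direction = 1

/-- `C` is the circle in the plane `Pl` of center `c` and radius `r ≥ 0`. -/
def IsCircleIn (Pl : AffineSubspace ℝ E3) (c : E3) (r : ℝ) (C : Set E3) : Prop :=
  c ∈ Pl ∧ 0 ≤ r ∧ C = {x ∈ (Pl : Set E3) | ‖x - c‖ = r}

/-- Property 𝒫: every plane meeting `S` meets it in a (possibly degenerate) circle. -/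
def PropertyP (S : Set E3) : Prop :=
  ∀ Pl : AffineSubspace ℝ E3, IsPlane Pl → ((Pl : Set E3) ∩ S).Nonempty →
    ∃ c r, IsCircleIn Pl c r ((Pl : Set E3) ∩ S)

/-- The Minkowski bilinear form ⟨x, y⟩₁ = x₁y₁ + x₂y₂ − x₃y₃ on ℝ³. -/
def mink (x y : E3) : ℝ := x 0 * y 0 + x 1 * y 1 - x 2 * y 2

/-- A spacelike plane: a plane on whose direction the Minkowski form is positive definite. -/
def IsSpacelikePlane (Pl : AffineSubspace ℝ E3) : Prop :=
  IsPlane Pl ∧ ∀ v ∈ Pl.direction, v ≠ 0 → 0 < mink v v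

/-- `C` is the circle (for the Minkowski-induced metric) in the spacelike plane `Pl`
of center `c` and radius `r ≥ 0`. -/
def IsMCircleIn (Pl : AffineSubspace ℝ E3) (c : E3) (r : ℝ) (C : Set E3) : Prop :=
  c ∈ Pl ∧ 0 ≤ r ∧ C = {x ∈ (Pl : Set E3) | mink (x - c) (x - c) = r ^ 2}

/-- Property 𝒫*: every spacelike plane meeting `S` meets it in a (possibly degenerate) circle. -/
def PropertyPStar (S : Set E3) : Prop :=
  ∀ Pl : AffineSubspace ℝ E3, IsSpacelikePlane Pl → ((Pl : Set E3) ∩ S).Nonempty →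
    ∃ c r, IsMCircleIn Pl c r ((Pl : Set E3) ∩ S)

/-- The tangent plane associated to a parametrization `f` at the parameter `u`:
the image of the derivative of `f` at `u`. -/
def TangentPlane (f : E2 → E3) (u : E2) : Submodule ℝ E3 :=
  LinearMap.range (fderiv ℝ f u : E2 →ₗ[ℝ] E3)

/-- A spacelike regular surface in 𝕃³: a regular surface all of whose tangent planes are
2-dimensional subspaces on which the Minkowski form is positive definite. -/
def IsSpacelikeSurface (S : Set E3) : Prop :=
  ∀ p ∈ S, ∃ f U, IsChartAt S p f U ∧
    ∀ u ∈ U, f u = p →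
      finrank ℝ (TangentPlane f u) = 2 ∧
      ∀ v ∈ TangentPlane f u, v ≠ 0 → 0 < mink v v

/-!
At a point `A` of the surface pick a tangent vector `v ≠ 0`. Timelike vectors span `𝕃³`, so some
timelike `n` is not orthogonal to `v`; the plane `Π` through `A` orthogonal to `n` is spacelike.
In a chart around `A`, the function `⟨n, ·⟩₁` is not critical at `A`, so it takes values on both
sides of `⟨n, A⟩₁` arbitrarily close to `A`. A punctured disc being connected, it takes the value
`⟨n, A⟩₁` again: `Π` meets the surface at a second point, hence in a circle of positive radius.
-/

section Analysis

variable {E : Type*} [NormedAddCommGroup E] [NormedSpace ℝ E]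

lemma isPreconnected_ball_diff_center (hE : 1 < Module.rank ℝ E) (x : E) {r : ℝ} (hr : 0 < r) :
    IsPreconnected (Metric.ball x r \ {x}) := by
  let e := OpenPartialHomeomorph.univBall x r
  have image_eq : e '' {0}ᶜ = Metric.ball x r \ {x} := by
    have hinj : Function.Injective e := by
      simpa [Set.injOn_univ, e] using e.injOn
    have hrange : Set.range e = Metric.ball x r := by
      simpa [e, OpenPartialHomeomorph.univBall_target x hr] using e.image_source_eq_target
    rw [Set.image_compl_eq_range_sdiff_image hinj, hrange, Set.image_singleton,
      OpenPartialHomeomorph.univBall_apply_zero]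
  rw [← image_eq]
  exact (isConnected_compl_singleton_of_one_lt_rank hE 0).isPreconnected.image _
    (OpenPartialHomeomorph.continuous_univBall x r).continuousOn

lemma exists_ne_eq_of_not_isLocalExtr (hE : 1 < Module.rank ℝ E) {g : E → ℝ} {U : Set E} {x : E}
    (hU : U ∈ nhds x) (hg : ContinuousOn g U) (hx : ¬IsLocalExtr g x) :
    ∃ y ∈ U, y ≠ x ∧ g y = g x := by
  obtain ⟨r, hr, hball⟩ := Metric.mem_nhds_iff.1 hU
  obtain ⟨hmin, hmax⟩ := not_or.1 hx
  obtain ⟨a, ha, hax⟩ : ∃ a ∈ Metric.ball x r, g a < g x := by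
    by_contra! h
    exact hmin (Filter.mem_of_superset (Metric.ball_mem_nhds x hr) h)
  obtain ⟨b, hb, hbx⟩ : ∃ b ∈ Metric.ball x r, g x < g b := by
    by_contra! h
    exact hmax (Filter.mem_of_superset (Metric.ball_mem_nhds x hr) h)
  have ha' : a ∈ Metric.ball x r \ {x} := ⟨ha, by rintro rfl; exact hax.false⟩
  have hb' : b ∈ Metric.ball x r \ {x} := ⟨hb, by rintro rfl; exact hbx.false⟩
  obtain ⟨y, ⟨hy, hyx⟩, hgy⟩ := (isPreconnected_ball_diff_center hE x hr).intermediate_value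
    ha' hb' (hg.mono (Set.sdiff_subset.trans hball)) ⟨hax.le, hbx.le⟩
  exact ⟨y, hball hy, hyx, hgy⟩

end Analysis

section Minkowski

lemma mink_self_pos_of_orthogonal_timelike {n v : E3} (hn : mink n n < 0) (hnv : mink n v = 0)
    (hv : v ≠ 0) : 0 < mink v v := by
  simp only [mink] at *
  have hn2 : 0 < n 2 * n 2 := by nlinarith [mul_self_nonneg (n 0), mul_self_nonneg (n 1)]
  have horiz : 0 < v 0 * v 0 + v 1 * v 1 := by
    by_contra! h
    have hv0 : v 0 = 0 := by nlinarith [mul_self_nonneg (v 0), mul_self_nonneg (v 1)]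
    have hv1 : v 1 = 0 := by nlinarith [mul_self_nonneg (v 0), mul_self_nonneg (v 1)]
    have hv2 : v 2 = 0 := by simpa [hv0, hv1, mul_self_pos.1 hn2] using hnv
    exact hv (by ext i; fin_cases i <;> simpa)
  have cauchy_schwarz : (n 2 * n 2) * (v 2 * v 2)
      ≤ (n 0 * n 0 + n 1 * n 1) * (v 0 * v 0 + v 1 * v 1) := by
    have hsq : (n 2 * n 2) * (v 2 * v 2) = (n 0 * v 0 + n 1 * v 1) ^ 2 := by
      linear_combination -(n 0 * v 0 + n 1 * v 1 + n 2 * v 2) * hnv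
    nlinarith [sq_nonneg (n 0 * v 1 - n 1 * v 0)]
  have vert_lt : (n 2 * n 2) * (v 2 * v 2) < (n 2 * n 2) * (v 0 * v 0 + v 1 * v 1) :=
    cauchy_schwarz.trans_lt (mul_lt_mul_of_pos_right (by linarith) horiz)
  linarith [lt_of_mul_lt_mul_left vert_lt hn2.le]

lemma exists_timelike_mink_ne_zero {v : E3} (hv : v ≠ 0) : ∃ n, mink n n < 0 ∧ mink n v ≠ 0 := by
  by_contra! h
  have orthogonal (a b c : ℝ) (habc : a * a + b * b - c * c < 0) :
      a * v 0 + b * v 1 - c * v 2 = 0 := by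
    simpa [mink] using h !₂[a, b, c] (by simpa [mink] using habc)
  have h2 : v 2 = 0 := by linarith [orthogonal 0 0 1 (by norm_num)]
  have h0 : v 0 = 0 := by linarith [orthogonal 1 0 2 (by norm_num)]
  have h1 : v 1 = 0 := by linarith [orthogonal 0 1 2 (by norm_num)]
  exact hv (by ext i; fin_cases i <;> simpa)

/-- The continuous linear functional `⟨n, ·⟩₁` on `𝕃³`. -/
def minkDual (n : E3) : E3 →L[ℝ] ℝ :=
  n 0 • EuclideanSpace.proj 0 + n 1 • EuclideanSpace.proj 1 - n 2 • EuclideanSpace.proj 2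

@[simp]
lemma minkDual_apply (n v : E3) : minkDual n v = mink n v := by
  simp [minkDual, mink]

/-- The affine subspace through `A` orthogonal to `n` for the Minkowski form; a plane when
`n ≠ 0`. -/
def minkOrthogonalPlane (n A : E3) : AffineSubspace ℝ E3 :=
  AffineSubspace.mk' A (LinearMap.ker (minkDual n : E3 →ₗ[ℝ] ℝ))

lemma mem_minkOrthogonalPlane {n A B : E3} :
    B ∈ minkOrthogonalPlane n A ↔ mink n B = mink n A := by
  rw [minkOrthogonalPlane, AffineSubspace.mem_mk', LinearMap.mem_ker, vsub_eq_sub, map_sub,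
    sub_eq_zero]
  simp

lemma isSpacelikePlane_minkOrthogonalPlane {n : E3} (hn : mink n n < 0) (A : E3) :
    IsSpacelikePlane (minkOrthogonalPlane n A) := by
  rw [IsSpacelikePlane, IsPlane, minkOrthogonalPlane, AffineSubspace.direction_mk']
  constructor
  · have hdual : (minkDual n : E3 →ₗ[ℝ] ℝ) ≠ 0 := fun h =>
      hn.ne (by simpa using LinearMap.congr_fun h n)
    have hrank := Module.Dual.finrank_ker_add_one_of_ne_zero hdual
    rw [finrank_euclideanSpace_fin] at hrank
    exact Nat.succ_injective hrank
  · intro v hv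
    exact mink_self_pos_of_orthogonal_timelike hn (by simpa using hv)

lemma IsMCircleIn.radius_pos_of_nontrivial {Pl : AffineSubspace ℝ E3} {c : E3} {r : ℝ} {C : Set E3}
    (hC : IsMCircleIn Pl c r C) (hPl : IsSpacelikePlane Pl) (hnt : C.Nontrivial) : 0 < r := by
  obtain ⟨hc, hr, rfl⟩ := hC
  obtain ⟨x, ⟨hx, hxr⟩, hxc⟩ := hnt.exists_ne c
  have hpos : 0 < mink (x - c) (x - c) :=
    hPl.2 _ (AffineSubspace.vsub_mem_direction hx hc) (sub_ne_zero.2 hxc)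
  exact hr.lt_of_ne' (sq_pos_iff.1 (hxr ▸ hpos))

end Minkowski

section Surface

variable {S : Set E3}

namespace IsChartAt

variable {p : E3} {f : E2 → E3} {U : Set E2}

lemma injOn (hf : IsChartAt S p f U) : Set.InjOn f U := by
  obtain ⟨-, -, -, -, -, φ, hφ⟩ := hf
  intro u hu v hv huv
  have h : φ ⟨u, hu⟩ = φ ⟨v, hv⟩ := Subtype.ext (by rw [hφ, hφ]; exact huv)
  exact congrArg Subtype.val (φ.injective h)

lemma mapsTo (hf : IsChartAt S p f U) : Set.MapsTo f U S := by
  obtain ⟨-, -, -, -, ⟨W, -, hW⟩, -⟩ := hf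
  exact Set.mapsTo_iff_image_subset.2 (hW.trans_subset Set.inter_subset_right)

lemma differentiableAt (hf : IsChartAt S p f U) {u : E2} (hu : u ∈ U) : DifferentiableAt ℝ f u :=
  (hf.2.1.contDiffAt (hf.1.mem_nhds hu)).differentiableAt (by simp)

lemma exists_ne_mem_map_eq (hf : IsChartAt S p f U) {u : E2} (hu : u ∈ U) {l : E3 →L[ℝ] ℝ}
    (hl : l ∘L fderiv ℝ f u ≠ 0) : ∃ B ∈ S, B ≠ f u ∧ l B = l (f u) := by
  have hrank : 1 < Module.rank ℝ E2 := by
    rw [← Module.finrank_eq_rank]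
    simp
  have hderiv : HasFDerivAt (l ∘ f) (l ∘L fderiv ℝ f u) u :=
    l.hasFDerivAt.comp u (hf.differentiableAt hu).hasFDerivAt
  obtain ⟨v, hv, hvu, hlv⟩ := exists_ne_eq_of_not_isLocalExtr hrank (hf.1.mem_nhds hu)
    (l.continuous.comp_continuousOn hf.2.1.continuousOn)
    (fun hextr => hl (hextr.hasFDerivAt_eq_zero hderiv))
  exact ⟨f v, hf.mapsTo hv, hf.injOn.ne hv hu hvu, hlv⟩

end IsChartAt

lemma IsSpacelikeSurface.isRegularSurface (hS : IsSpacelikeSurface S) : IsRegularSurface S := by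
  intro p hp
  obtain ⟨f, U, hf, -⟩ := hS p hp
  exact ⟨f, U, hf⟩

lemma IsRegularSurface.exists_timelike_nontrivial_inter (hS : IsRegularSurface S) {A : E3}
    (hA : A ∈ S) :
    ∃ n, mink n n < 0 ∧ ((minkOrthogonalPlane n A : Set E3) ∩ S).Nontrivial := by
  obtain ⟨f, U, hf⟩ := hS A hA
  obtain ⟨u, hu, rfl⟩ := hf.2.2.2.1
  obtain ⟨v, hv⟩ := exists_ne (0 : E2)
  have htangent : fderiv ℝ f u v ≠ 0 := (map_ne_zero_iff _ (hf.2.2.1 u hu)).2 hv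
  obtain ⟨n, hn, hnv⟩ := exists_timelike_mink_ne_zero htangent
  have hdual : minkDual n ∘L fderiv ℝ f u ≠ 0 := fun h =>
    hnv (by simpa using DFunLike.congr_fun h v)
  obtain ⟨B, hB, hBA, hnB⟩ := hf.exists_ne_mem_map_eq hu hdual
  simp only [minkDual_apply] at hnB
  exact ⟨n, hn, B, ⟨mem_minkOrthogonalPlane.2 hnB, hB⟩,
    f u, ⟨mem_minkOrthogonalPlane.2 rfl, hA⟩, hBA⟩

end Surface

theorem every_point_on_nondegenerate_circle_general {S : Set E3} (hS : IsRegularSurface S)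
    (hP : PropertyPStar S) {A : E3} (hA : A ∈ S) :
    ∃ Pl : AffineSubspace ℝ E3, IsSpacelikePlane Pl ∧
      ∃ (c : E3) (r : ℝ), 0 < r ∧ IsMCircleIn Pl c r ((Pl : Set E3) ∩ S) ∧
        A ∈ (Pl : Set E3) ∩ S := by
  obtain ⟨n, hn, hnt⟩ := hS.exists_timelike_nontrivial_inter hA
  have hPl := isSpacelikePlane_minkOrthogonalPlane hn A
  obtain ⟨c, r, hcircle⟩ := hP _ hPl hnt.nonempty
  exact ⟨_, hPl, c, r, hcircle.radius_pos_of_nontrivial hPl hnt, hcircle,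
    mem_minkOrthogonalPlane.2 rfl, hA⟩

/-- On a nonempty connected spacelike regular surface with property 𝒫*,
every point lies on a non-degenerate circle cut out by some spacelike plane. -/
theorem every_point_on_nondegenerate_circle (S : Set E3) (hne : S.Nonempty)
    (hconn : IsConnected S) (hreg : IsSpacelikeSurface S) (hP : PropertyPStar S) :
    ∀ A ∈ S, ∃ Pl : AffineSubspace ℝ E3, IsSpacelikePlane Pl ∧
      ∃ (c : E3) (r : ℝ), 0 < r ∧ IsMCircleIn Pl c r ((Pl : Set E3) ∩ S) ∧
        A ∈ (Pl : Set E3) ∩ S := by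
  exact fun _ hA => every_point_on_nondegenerate_circle_general hreg.isRegularSurface hP hA
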